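/- Let d ≥ 1, let N ≥ 2, and let x_1, …, x_N be pairwise distinct points in ℝ^d. Suppose σ* ∈ (0, ∞)^N is a local maximum of the leave-one-out total log-likelihood L_LOO(σ) = ∑_{i=1}^N log( ∑_{j ≠ i} K_{σ_j}(x_i, x_j) ) on (0, ∞)^N. Then for every index j, (σ*_j)² ≥ (1/d) · min_{i ≠ j} ‖x_i − x_j‖² > 0. In particular, data-copying (some σ*_j arbitrarily close to 0) cannot occur at any optimal solution of the LOO-MLL objective when the data points are distinct. -/

import Mathlib

/-- The isotropic Gaussian kernel on `ℝ^d` with center `μ` and bandwidth `σ`: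
`K_σ(x, μ) = (2πσ²)^{-d/2} · exp(−‖x − μ‖² / (2σ²))`. -/
noncomputable def gaussKernel (d : ℕ) (σ : ℝ) (x μ : EuclideanSpace ℝ (Fin d)) : ℝ :=
  (2 * Real.pi * σ ^ 2) ^ (-(d : ℝ) / 2) * Real.exp (-‖x - μ‖ ^ 2 / (2 * σ ^ 2))

theorem gaussKernel_pos_aux (d : ℕ) (s : ℝ) (hs : 0 < s) (x μ : EuclideanSpace ℝ (Fin d)) :
    0 < gaussKernel d s x μ := by
  unfold gaussKernel
  have := Real.pi_pos
  positivity

theorem gaussKernel_lt_aux (d : ℕ) (hd : 1 ≤ d) (s t : ℝ) (hs : 0 < s) (hst : s < t)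
    (x μ : EuclideanSpace ℝ (Fin d)) (hr : (d : ℝ) * t ^ 2 ≤ ‖x - μ‖ ^ 2) :
    gaussKernel d s x μ < gaussKernel d t x μ := by
  unfold gaussKernel
  generalize ‖x - μ‖ ^ 2 = r at *
  have hpi := Real.pi_pos
  have ht : 0 < t := hs.trans hst
  have hd' : (0 : ℝ) < d := by exact_mod_cast hd
  rw [Real.rpow_def_of_pos (by positivity), Real.rpow_def_of_pos (by positivity),
    ← Real.exp_add, ← Real.exp_add, Real.exp_lt_exp]
  have hsq : s ^ 2 < t ^ 2 := by gcongr
  have hs2 : 0 < s ^ 2 := by positivity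
  have ht2 : 0 < t ^ 2 := by positivity
  have l1 : Real.log (2 * Real.pi * s ^ 2) = Real.log (2 * Real.pi) + Real.log (s ^ 2) :=
    Real.log_mul (by positivity) (by positivity)
  have l2 : Real.log (2 * Real.pi * t ^ 2) = Real.log (2 * Real.pi) + Real.log (t ^ 2) :=
    Real.log_mul (by positivity) (by positivity)
  rw [l1, l2]
  clear l1 l2
  generalize s ^ 2 = a at *
  generalize t ^ 2 = b at *
  have hlog : Real.log (b / a) < b / a - 1 :=
    Real.log_lt_sub_one_of_pos (by positivity) (by
      intro h
      rw [div_eq_one_iff_eq hs2.ne'] at h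
      linarith)
  rw [Real.log_div ht2.ne' hs2.ne'] at hlog
  have h1 : (d : ℝ) * (Real.log b - Real.log a) < d * (b / a - 1) := by gcongr
  have h2 : (d : ℝ) * (b / a - 1) ≤ r / a - r / b := by
    have e : r / a - r / b - (d : ℝ) * (b / a - 1) = (b - a) * (r - d * b) / (a * b) := by
      field_simp
    have : 0 ≤ (b - a) * (r - d * b) / (a * b) :=
      div_nonneg (mul_nonneg (by linarith) (by linarith)) (by positivity)
    linarith
  have e1 : -r / (2 * a) = -(r / a) / 2 := by field_simp
  have e2 : -r / (2 * b) = -(r / b) / 2 := by field_simp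
  rw [e1, e2]
  linarith

/-- If `σ*` is a local maximum of the leave-one-out total log-likelihood for A-KDE on the
set of positive bandwidth vectors and the data points are pairwise distinct, then for every
index `j`, `(σ*_j)² ≥ (1/d) · min_{i ≠ j} ‖x_i − x_j‖² > 0`; in particular data-copying
cannot occur at any optimal solution of the LOO-MLL objective. -/
theorem akde_loo_no_data_copying_at_local_max
    (d N : ℕ) (hd : 1 ≤ d) (hN : 2 ≤ N)
    (x : Fin N → EuclideanSpace ℝ (Fin d)) (hx : Function.Injective x)
    (σs : Fin N → ℝ) (hσs : ∀ j, 0 < σs j)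
    (hmax : IsLocalMaxOn
      (fun σ : Fin N → ℝ =>
        ∑ i, Real.log (∑ j ∈ Finset.univ.erase i, gaussKernel d (σ j) (x i) (x j)))
      {σ : Fin N → ℝ | ∀ j, 0 < σ j} σs) :
    ∀ j : Fin N, ∀ m2 : ℝ,
      IsLeast {r : ℝ | ∃ i : Fin N, i ≠ j ∧ r = ‖x i - x j‖ ^ 2} m2 →
        (1 / (d : ℝ)) * m2 ≤ (σs j) ^ 2 ∧ 0 < (1 / (d : ℝ)) * m2 := by
  intro j m2 hm
  have hd' : (0 : ℝ) < d := by exact_mod_cast hd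
  obtain ⟨⟨i0, hi0, hm0⟩, hlow⟩ := hm
  have hlow' : ∀ i, i ≠ j → m2 ≤ ‖x i - x j‖ ^ 2 := fun i hi => hlow ⟨i, hi, rfl⟩
  have hmpos : 0 < m2 := by
    have : x i0 - x j ≠ 0 := sub_ne_zero.mpr (fun h => hi0 (hx h))
    rw [hm0]
    positivity
  refine ⟨?_, by positivity⟩
  by_contra hcon
  have hlt : (d : ℝ) * σs j ^ 2 < m2 := by
    rw [not_le, one_div, inv_mul_eq_div, lt_div_iff₀ hd'] at hcon
    linarith
  have hc : Filter.Tendsto (fun t : ℝ => Function.update σs j t) (nhdsWithin (σs j) (Set.Ioi (σs j)))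
      (nhdsWithin σs {σ : Fin N → ℝ | ∀ j, 0 < σ j}) := by
    refine tendsto_nhdsWithin_iff.mpr ⟨?_, ?_⟩
    · have h : Continuous (fun t : ℝ => Function.update σs j t) :=
        continuous_const.update j continuous_id
      have h2 := h.tendsto (σs j)
      rw [Function.update_eq_self] at h2
      exact h2.mono_left nhdsWithin_le_nhds
    · filter_upwards [self_mem_nhdsWithin] with t ht
      intro k
      by_cases hk : k = j
      · subst hk
        simpa using (hσs k).trans ht
      · simpa [hk] using hσs k
  have hev := hc.eventually hmax
  have hev2 : ∀ᶠ t in nhdsWithin (σs j) (Set.Ioi (σs j)), (d : ℝ) * t ^ 2 < m2 := by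
    have h : Continuous (fun t : ℝ => (d : ℝ) * t ^ 2) := by fun_prop
    exact ((h.tendsto (σs j)).eventually (gt_mem_nhds hlt)).filter_mono nhdsWithin_le_nhds
  obtain ⟨t, ⟨h1, h2⟩, ht⟩ := ((hev.and hev2).and self_mem_nhdsWithin).exists
  have ht : σs j < t := ht
  refine absurd h1 (not_le.mpr ?_)
  have key : ∀ i, i ≠ j →
      Real.log (∑ k ∈ Finset.univ.erase i, gaussKernel d (σs k) (x i) (x k)) <
      Real.log (∑ k ∈ Finset.univ.erase i,
        gaussKernel d (Function.update σs j t k) (x i) (x k)) := by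
    intro i hi
    have hj : j ∈ Finset.univ.erase i := by simp [hi.symm]
    have hlt : gaussKernel d (σs j) (x i) (x j) < gaussKernel d t (x i) (x j) :=
      gaussKernel_lt_aux d hd _ _ (hσs j) ht _ _ (h2.le.trans (hlow' i hi))
    apply Real.log_lt_log
    · exact Finset.sum_pos (fun k _ => gaussKernel_pos_aux d _ (hσs k) _ _) ⟨j, hj⟩
    · refine Finset.sum_lt_sum (fun k _ => ?_) ⟨j, hj, by simpa using hlt⟩
      by_cases hk : k = j
      · subst hk
        simpa using hlt.le
      · simp [hk]
  refine Finset.sum_lt_sum (fun i _ => ?_) ⟨i0, Finset.mem_univ _, key i0 hi0⟩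
  by_cases hi : i = j
  · subst hi
    refine le_of_eq (congrArg Real.log (Finset.sum_congr rfl fun k hk => ?_))
    rw [Function.update_of_ne (Finset.ne_of_mem_erase hk)]
  · exact (key i hi).le
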